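/- For every δ > 0 there exists a constant C > 0 such that for every x ∈ (0,1) and every y > x + δ one has |T₂(x,y)| ≤ C·x·y/sinh(y²). -/

import Mathlib

open MeasureTheory Real Set

/-- `T₂(x,y) = (y³/x³)·(sinh(x²)/sinh(y²) − x²/y²)·(1/sinh|x²−y²| − 1/sinh(x²+y²))`. -/
noncomputable def T2 (x y : ℝ) : ℝ :=
  (y ^ 3 / x ^ 3) * (Real.sinh (x ^ 2) / Real.sinh (y ^ 2) - x ^ 2 / y ^ 2) *
    (1 / Real.sinh |x ^ 2 - y ^ 2| - 1 / Real.sinh (x ^ 2 + y ^ 2))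

/-!
Put `a = x²` and `b = y²` with `a < b`. Convexity of `sinh` makes `sinh t / t` increasing, so the
first bracket of `T₂` lies in `[-a / b, 0]`. The second bracket equals
`2 (cosh b / sinh (b - a)) (sinh a / sinh (a + b))`. Expanding `cosh ((b - a) + a)` bounds the
first quotient by `coth (b - a) exp a`, and `sinh (a + b) ≥ cosh a sinh b` with `tanh a ≤ a` bounds
the second by `a / sinh b`. Hence `|T₂(x, y)| ≤ 2 coth (y² - x²) exp (x²) x y / sinh (y²)`. The
factor `exp (x²)` is bounded for bounded `x`, and `coth (y² - x²) ≤ coth (δ²)` when `y ≥ x + δ`.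
-/

theorem convexOn_sinh : ConvexOn ℝ (Ici 0) sinh := by
  refine MonotoneOn.convexOn_of_deriv (convex_Ici 0) continuous_sinh.continuousOn
    differentiable_sinh.differentiableOn ?_
  rw [Real.deriv_sinh]
  exact cosh_strictMonoOn.monotoneOn.mono interior_subset

theorem monotoneOn_sinh_div_self : MonotoneOn (fun t ↦ sinh t / t) (Ioi 0) := by
  intro s hs t ht hst
  simpa only [sinh_zero, sub_zero] using
    convexOn_sinh.secant_mono self_mem_Ici (Ioi_subset_Ici_self hs) (Ioi_subset_Ici_self ht)
      (ne_of_gt hs) (ne_of_gt ht) hst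

theorem sinh_le_mul_cosh {t : ℝ} (ht : 0 ≤ t) : sinh t ≤ t * cosh t := by
  rcases ht.eq_or_lt with rfl | ht
  · simp
  · have hslope := convexOn_sinh.slope_le_of_hasDerivAt self_mem_Ici ht.le ht (hasDerivAt_sinh t)
    rwa [slope_def_field, sinh_zero, sub_zero, sub_zero, div_le_iff₀' ht] at hslope

theorem antitoneOn_cosh_div_sinh : AntitoneOn (fun t ↦ cosh t / sinh t) (Ioi 0) := by
  intro s hs t ht hst
  have hsub : 0 ≤ sinh (t - s) := sinh_nonneg_iff.2 (sub_nonneg.2 hst)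
  rw [sinh_sub] at hsub
  rw [div_le_div_iff₀ (sinh_pos_iff.2 ht) (sinh_pos_iff.2 hs)]
  linarith

section TwoPoints

variable {a b : ℝ}

theorem abs_sinh_div_sinh_sub_div_le (ha : 0 < a) (hab : a ≤ b) :
    |sinh a / sinh b - a / b| ≤ a / b := by
  have hb : 0 < b := ha.trans_le hab
  have hsb : 0 < sinh b := sinh_pos_iff.2 hb
  have hnonneg : 0 ≤ sinh a / sinh b := div_nonneg (sinh_nonneg_iff.2 ha.le) hsb.le
  have hle : sinh a / sinh b ≤ a / b := by
    have hmono := monotoneOn_sinh_div_self ha hb hab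
    rw [div_le_div_iff₀ ha hb] at hmono
    rw [div_le_div_iff₀ hsb hb]
    linarith
  rw [abs_of_nonpos (sub_nonpos.2 hle)]
  linarith

theorem cosh_div_sinh_sub_le (ha : 0 ≤ a) (hab : a < b) :
    cosh b / sinh (b - a) ≤ cosh (b - a) / sinh (b - a) * exp a := by
  have : 0 < sinh (b - a) := sinh_pos_iff.2 (sub_pos.2 hab)
  rw [div_mul_eq_mul_div]
  gcongr
  calc cosh b = cosh (b - a) * cosh a + sinh (b - a) * sinh a := by
        rw [← cosh_add, sub_add_cancel]
    _ ≤ cosh (b - a) * cosh a + cosh (b - a) * sinh a := by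
        have := sinh_nonneg_iff.2 ha
        gcongr
        exact (sinh_lt_cosh _).le
    _ = cosh (b - a) * exp a := by rw [← mul_add, cosh_add_sinh]

theorem sinh_div_sinh_add_le (ha : 0 ≤ a) (hb : 0 < b) :
    sinh a / sinh (a + b) ≤ a / sinh b := by
  have hsb : 0 < sinh b := sinh_pos_iff.2 hb
  rw [div_le_div_iff₀ (sinh_pos_iff.2 (by linarith)) hsb]
  calc sinh a * sinh b ≤ a * cosh a * sinh b := by
        gcongr
        exact sinh_le_mul_cosh ha
    _ ≤ a * (sinh a * cosh b + cosh a * sinh b) := by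
        have : 0 ≤ a * (sinh a * cosh b) :=
          mul_nonneg ha (mul_nonneg (sinh_nonneg_iff.2 ha) (cosh_pos b).le)
        linarith
    _ = a * sinh (a + b) := by rw [sinh_add]

theorem one_div_sinh_sub_sub_one_div_sinh_add (hsub : a ≠ b) (hadd : a + b ≠ 0) :
    1 / sinh (b - a) - 1 / sinh (a + b) =
      2 * (cosh b / sinh (b - a)) * (sinh a / sinh (a + b)) := by
  have hdiff : sinh (a + b) - sinh (b - a) = 2 * cosh b * sinh a := by
    rw [sinh_add, sinh_sub]
    ring
  rw [div_sub_div _ _ (sinh_ne_zero.2 (sub_ne_zero.2 hsub.symm)) (sinh_ne_zero.2 hadd), one_mul,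
    mul_one, hdiff, mul_div_mul_comm, mul_div_assoc]

theorem abs_one_div_sinh_sub_sub_one_div_sinh_add_le (ha : 0 ≤ a) (hab : a < b) :
    |1 / sinh (b - a) - 1 / sinh (a + b)| ≤
      2 * (cosh (b - a) / sinh (b - a) * exp a) * (a / sinh b) := by
  have hb : 0 < b := ha.trans_lt hab
  have : 0 < sinh (b - a) := sinh_pos_iff.2 (sub_pos.2 hab)
  have : 0 < sinh (a + b) := sinh_pos_iff.2 (by linarith)
  have : 0 ≤ sinh a := sinh_nonneg_iff.2 ha
  rw [one_div_sinh_sub_sub_one_div_sinh_add hab.ne (by linarith), abs_of_nonneg (by positivity)]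
  gcongr 2 * ?_ * ?_
  · exact cosh_div_sinh_sub_le ha hab
  · exact sinh_div_sinh_add_le ha hb

end TwoPoints

theorem abs_T2_le {x y : ℝ} (hx : 0 < x) (hxy : x < y) :
    |T2 x y| ≤ 2 * (cosh (y ^ 2 - x ^ 2) / sinh (y ^ 2 - x ^ 2)) * exp (x ^ 2) * x * y /
      sinh (y ^ 2) := by
  have hy : 0 < y := hx.trans hxy
  have hsq : x ^ 2 < y ^ 2 := by gcongr
  have hratio : 0 < y ^ 3 / x ^ 3 := by positivity
  rw [T2, abs_sub_comm (x ^ 2), abs_of_pos (sub_pos.2 hsq), abs_mul, abs_mul, abs_of_pos hratio]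
  calc _ ≤ y ^ 3 / x ^ 3 * (x ^ 2 / y ^ 2) *
        (2 * (cosh (y ^ 2 - x ^ 2) / sinh (y ^ 2 - x ^ 2) * exp (x ^ 2)) *
          (x ^ 2 / sinh (y ^ 2))) := by
        gcongr
        · exact abs_sinh_div_sinh_sub_div_le (by positivity) hsq.le
        · exact abs_one_div_sinh_sub_sub_one_div_sinh_add_le (by positivity) hsq
    _ = _ := by field_simp

theorem T2_bound_far_general (R δ : ℝ) (hδ : 0 < δ) :
    ∃ C : ℝ, 0 < C ∧ ∀ x y : ℝ, x ∈ Ioo 0 R → x + δ < y →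
      |T2 x y| ≤ C * x * y / sinh (y ^ 2) := by
  have : 0 < sinh (δ ^ 2) := sinh_pos_iff.2 (by positivity)
  refine ⟨2 * (cosh (δ ^ 2) / sinh (δ ^ 2)) * exp (R ^ 2), by positivity, ?_⟩
  rintro x y ⟨hx, hxR⟩ hxy
  have hy : 0 < y := by linarith
  have hgap : δ ^ 2 ≤ y ^ 2 - x ^ 2 := by nlinarith
  have hcoth : cosh (y ^ 2 - x ^ 2) / sinh (y ^ 2 - x ^ 2) ≤ cosh (δ ^ 2) / sinh (δ ^ 2) :=
    antitoneOn_cosh_div_sinh (pow_pos hδ 2) ((pow_pos hδ 2).trans_le hgap) hgap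
  have : 0 < sinh (y ^ 2) := sinh_pos_iff.2 (by positivity)
  refine (abs_T2_le hx (by linarith)).trans ?_
  gcongr

theorem T2_bound_far (δ : ℝ) (hδ : 0 < δ) :
    ∃ C : ℝ, 0 < C ∧ ∀ x y : ℝ, x ∈ Set.Ioo (0 : ℝ) 1 → x + δ < y →
      |T2 x y| ≤ C * x * y / Real.sinh (y ^ 2) :=
  T2_bound_far_general 1 δ hδ
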